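/- arXiv:1205.0343 — 2 statements merged into one kernel-verified Lean document; each statement's English description precedes it below -/
import Mathlib

section
/- Let n_1 ≥ 3 be an odd integer and n_2 a positive even integer with n_1 = 3 or n_2 = 2. Then the signed domination number of the complete bipartite graph K_{n_1,n_2} equals 3. -/
open scoped Classical

/-- The signed domination number of a finite simple graph `G`: the minimum weight of a
function `f : V → {−1, 1}` such that `f(N[v]) ≥ 1` for every vertex `v`. -/
noncomputable def signedDomNum {V : Type*} [Fintype V] (G : SimpleGraph V) : ℤ :=
  sInf {w : ℤ | ∃ f : V → ℤ, (∀ v, f v = 1 ∨ f v = -1) ∧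
    (∀ v, 1 ≤ f v + ∑ u ∈ G.neighborFinset v, f u) ∧ w = ∑ v, f v}

/-!
For signs `g` and `h` on the two parts, domination only involves the total weight of the opposite
part: `1 ≤ g a + ∑ h` and `1 ≤ h b + ∑ g`. So both totals are nonnegative, and a negative sign in
one part forces the total of the other up to `2`. Since the total over the odd part is odd, the
weight is at least `3`. It is attained by making the part of size `3` (or `2`) constantly `1` and
balancing the signs in the other part as evenly as possible.
-/

section Signs

variable {ι : Type*} [Fintype ι]

theorem odd_sum_iff_odd_card {f : ι → ℤ} (hf : ∀ i, Odd (f i)) :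
    Odd (∑ i, f i) ↔ Odd (Fintype.card ι) := by
  have hmod : ∀ i, f i % 2 = 1 := fun i => Int.odd_iff.mp (hf i)
  rw [Int.odd_iff, Finset.sum_int_mod, ← Int.odd_coe_nat, Int.odd_iff]
  simp [hmod]

theorem exists_signs_sum_eq {k : ℕ} (hk : k ≤ Fintype.card ι) :
    ∃ f : ι → ℤ, (∀ i, f i = 1 ∨ f i = -1) ∧ ∑ i, f i = 2 * k - Fintype.card ι := by
  obtain ⟨s, -, hs⟩ := Finset.exists_subset_card_eq (s := Finset.univ (α := ι)) hk
  refine ⟨fun i => 2 * (if i ∈ s then 1 else 0) - 1, fun i => ?_, ?_⟩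
  · by_cases hi : i ∈ s <;> simp [hi]
  · simp [hs, mul_comm]

end Signs

/-- `f` is a signed dominating function of `G`: its values are signs, and its sum over every closed
neighborhood, written as the vertex itself plus its neighbors, is at least `1`. -/
def IsSignedDominating {V : Type*} [Fintype V] (G : SimpleGraph V) (f : V → ℤ) : Prop :=
  (∀ v, f v = 1 ∨ f v = -1) ∧ ∀ v, 1 ≤ f v + ∑ u ∈ G.neighborFinset v, f u

theorem IsSignedDominating.signedDomNum_eq {V : Type*} [Fintype V] {G : SimpleGraph V}
    {f : V → ℤ} (hf : IsSignedDominating G f)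
    (hmin : ∀ f', IsSignedDominating G f' → ∑ v, f v ≤ ∑ v, f' v) :
    signedDomNum G = ∑ v, f v := by
  refine IsLeast.csInf_eq ⟨⟨f, hf.1, hf.2, rfl⟩, ?_⟩
  rintro _ ⟨f', hsign, hdom, rfl⟩
  exact hmin f' ⟨hsign, hdom⟩

section CompleteBipartite

variable {α β : Type*} [Fintype α] [Fintype β] {g : α → ℤ} {h : β → ℤ}

theorem neighborFinset_completeBipartiteGraph_inl (a : α) :
    (completeBipartiteGraph α β).neighborFinset (Sum.inl a) =
      Finset.univ.map Function.Embedding.inr := by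
  ext (x | x) <;> simp

theorem neighborFinset_completeBipartiteGraph_inr (b : β) :
    (completeBipartiteGraph α β).neighborFinset (Sum.inr b) =
      Finset.univ.map Function.Embedding.inl := by
  ext (x | x) <;> simp

theorem isSignedDominating_sumElim_iff :
    IsSignedDominating (completeBipartiteGraph α β) (Sum.elim g h) ↔
      ((∀ a, g a = 1 ∨ g a = -1) ∧ ∀ b, h b = 1 ∨ h b = -1) ∧
        (∀ a, 1 ≤ g a + ∑ b, h b) ∧ ∀ b, 1 ≤ h b + ∑ a, g a := by
  simp [IsSignedDominating, neighborFinset_completeBipartiteGraph_inl,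
    neighborFinset_completeBipartiteGraph_inr]

namespace IsSignedDominating

theorem sumElim_swap (hd : IsSignedDominating (completeBipartiteGraph α β) (Sum.elim g h)) :
    IsSignedDominating (completeBipartiteGraph β α) (Sum.elim h g) := by
  rw [isSignedDominating_sumElim_iff] at hd ⊢
  exact ⟨hd.1.symm, hd.2.symm⟩

theorem sum_right_nonneg
    (hd : IsSignedDominating (completeBipartiteGraph α β) (Sum.elim g h)) : 0 ≤ ∑ b, h b := by
  obtain ⟨⟨hg, -⟩, hleft, hright⟩ := isSignedDominating_sumElim_iff.mp hd
  rcases isEmpty_or_nonempty α with _ | ⟨⟨a⟩⟩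
  · refine Finset.sum_nonneg fun b _ => ?_
    have hb : 1 ≤ h b := by simpa using hright b
    exact zero_le_one.trans hb
  · have hsign := hg a
    have hdom := hleft a
    omega

theorem sum_left_eq_card_or_two_le_sum_right
    (hd : IsSignedDominating (completeBipartiteGraph α β) (Sum.elim g h)) :
    ∑ a, g a = Fintype.card α ∨ 2 ≤ ∑ b, h b := by
  obtain ⟨⟨hg, -⟩, hleft, -⟩ := isSignedDominating_sumElim_iff.mp hd
  by_cases hall : ∀ a, g a = 1
  · exact .inl (by simp [hall])
  · obtain ⟨a, ha⟩ := not_forall.mp hall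
    have hneg : g a = -1 := (hg a).resolve_left ha
    have hdom := hleft a
    exact .inr (by omega)

theorem three_le_sum (hα : Odd (Fintype.card α))
    (hcard : Fintype.card α = 3 ∨ Fintype.card β = 2) {f : α ⊕ β → ℤ}
    (hf : IsSignedDominating (completeBipartiteGraph α β) f) : 3 ≤ ∑ v, f v := by
  obtain ⟨g, h, rfl⟩ : ∃ g h, f = Sum.elim g h := ⟨_, _, (Sum.elim_comp_inl_inr f).symm⟩
  have hg_odd : ∀ a, Odd (g a) := fun a => by
    rcases hf.1 (.inl a) with ha | ha <;> simp only [Sum.elim_inl] at ha <;> simp [ha]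
  obtain ⟨m, hm⟩ : Odd (∑ a, g a) := (odd_sum_iff_odd_card hg_odd).mpr hα
  have hleft_pos : 1 ≤ ∑ a, g a := by
    have hleft_nonneg := hf.sumElim_swap.sum_right_nonneg
    omega
  have hright_nonneg := hf.sum_right_nonneg
  simp only [Fintype.sum_sum_type, Sum.elim_inl, Sum.elim_inr]
  rcases hcard with hcard | hcard
  · rcases hf.sum_left_eq_card_or_two_le_sum_right with hleft | hright <;> omega
  · rcases hf.sumElim_swap.sum_left_eq_card_or_two_le_sum_right with hright | hleft <;>
      omega

end IsSignedDominating

theorem isSignedDominating_sumElim_one (hα : 2 ≤ Fintype.card α)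
    (hsign : ∀ b, h b = 1 ∨ h b = -1) (hsum : 0 ≤ ∑ b, h b) :
    IsSignedDominating (completeBipartiteGraph α β) (Sum.elim 1 h) := by
  refine isSignedDominating_sumElim_iff.mpr ⟨⟨fun _ => .inl rfl, hsign⟩, fun _ => ?_, fun b => ?_⟩
  · simpa using hsum
  · rcases hsign b with hb | hb <;> simp only [hb, Pi.one_apply, Finset.sum_const,
      Finset.card_univ, nsmul_eq_mul, mul_one] <;> omega

theorem exists_isSignedDominating_sum_eq_three (hα : Odd (Fintype.card α))
    (hβ : Even (Fintype.card β)) (hcard : Fintype.card α = 3 ∨ Fintype.card β = 2) :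
    ∃ f, IsSignedDominating (completeBipartiteGraph α β) f ∧ ∑ v, f v = 3 := by
  rcases hcard with hcard | hcard
  · obtain ⟨m, hm⟩ := hβ
    obtain ⟨h, hsign, hsum⟩ := exists_signs_sum_eq (ι := β) (k := m) (by omega)
    have hzero : ∑ b, h b = 0 := by omega
    exact ⟨Sum.elim 1 h, isSignedDominating_sumElim_one (by omega) hsign hzero.ge,
      by simp [hcard, hzero]⟩
  · obtain ⟨m, hm⟩ := hα
    obtain ⟨g, hsign, hsum⟩ := exists_signs_sum_eq (ι := α) (k := m + 1) (by omega)
    have hone : ∑ a, g a = 1 := by omega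
    exact ⟨Sum.elim g 1,
      (isSignedDominating_sumElim_one hcard.ge hsign (by omega)).sumElim_swap,
      by simp [hcard, hone]⟩

theorem signedDomNum_completeBipartite_eq_three_general (hα : Odd (Fintype.card α))
    (hβ : Even (Fintype.card β)) (hcard : Fintype.card α = 3 ∨ Fintype.card β = 2) :
    signedDomNum (completeBipartiteGraph α β) = 3 := by
  obtain ⟨f, hf, hsum⟩ := exists_isSignedDominating_sum_eq_three hα hβ hcard
  rw [hf.signedDomNum_eq fun f' hf' => hsum.trans_le (hf'.three_le_sum hα hcard), hsum]

end CompleteBipartite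

theorem signedDomNum_completeBipartite_eq_three
    (n₁ n₂ : ℕ) (h₁ : Odd n₁) (h₁' : 3 ≤ n₁) (h₂ : Even n₂) (h₂' : 0 < n₂)
    (h : n₁ = 3 ∨ n₂ = 2) :
    signedDomNum (completeBipartiteGraph (Fin n₁) (Fin n₂)) = 3 :=
  signedDomNum_completeBipartite_eq_three_general (by simpa using h₁) (by simpa using h₂)
    (by simpa using h)
end

section
/- Let k ≥ 2 and n_1, …, n_k be positive integers, let t be the number of indices i with n_i odd, let I_1 = {i : n_i = 1}, and let I_2 = {i : n_i = 2}. If t is even and |I_1| + |I_2| ≥ t/2 + 1, then the signed domination number of the complete k-partite graph K_{n_1,…,n_k} equals 2. -/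
open scoped Classical

/-!
For the complete multipartite graph with parts `V i`, write `W` for the weight of `f` and `s i` for
its sum over `V i`: domination at `v ∈ V i` reads `s i < f v + W`.

Lower bound: if `W ≤ 0`, every nonempty part has `s i ≤ W ≤ 0`, and some vertex has value `-1`, so
that its part has `s i < W`; summing over all parts gives `W < W`. Hence `W ≥ 1`, and `W ≥ 2` when
the number of vertices is even.

Upper bound: give the value `1` to all vertices of some parts of size at most `2`, and make every
other part sum to `0` or `-1` according to the parity of its size. Compared with balancing all
parts, which has weight minus the number `t` of odd parts, each chosen part raises the weight by
exactly `2`, so `t / 2 + 1` chosen parts give `W = 2`. This `f` is dominating because `f v = 1` and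
`s i ≤ 2` in a chosen part, while `f v ≥ -1` and `s i ≤ 0` in any other.
-/

section Sign

variable {α : Type*} [Fintype α]

theorem even_sum_iff_even_card_of_sign {f : α → ℤ} (hf : ∀ a, f a = 1 ∨ f a = -1) :
    Even (∑ a, f a) ↔ Even (Fintype.card α) := by
  have hdiff : Even (∑ a, f a - Fintype.card α) := by
    have hsub : ∑ a, f a - (Fintype.card α : ℤ) = ∑ a, (f a - 1) := by
      simp [Finset.sum_sub_distrib]
    rw [hsub]
    refine Finset.even_sum _ fun a _ => ?_
    rcases hf a with h | h <;> simp [h]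
  rwa [Int.even_sub, Int.even_coe_nat] at hdiff

theorem exists_eq_neg_one_of_sum_nonpos [Nonempty α] {f : α → ℤ}
    (hf : ∀ a, f a = 1 ∨ f a = -1) (hsum : ∑ a, f a ≤ 0) : ∃ a, f a = -1 := by
  by_contra! hne
  have hone : ∀ a, f a = 1 := fun a => (hf a).resolve_right (hne a)
  exact hsum.not_gt (Finset.sum_pos (fun a _ => by simp [hone a]) Finset.univ_nonempty)

variable (α) in
theorem exists_sign_sum_eq_neg_card_mod_two :
    ∃ f : α → ℤ, (∀ a, f a = 1 ∨ f a = -1) ∧ ∑ a, f a = -((Fintype.card α : ℤ) % 2) := by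
  obtain ⟨T, -, hT⟩ : ∃ T ⊆ (Finset.univ : Finset α), T.card = (Fintype.card α + 1) / 2 :=
    Finset.exists_subset_card_eq (by rw [Finset.card_univ]; omega)
  have hsum : ∑ a, (if a ∈ T then (-1 : ℤ) else 1) = Fintype.card α - 2 * T.card := by
    have hsign (a : α) : (if a ∈ T then (-1 : ℤ) else 1) = 1 - 2 * if a ∈ T then 1 else 0 := by
      split_ifs <;> norm_num
    simp [hsign, Finset.sum_sub_distrib, mul_comm]
  refine ⟨fun a => if a ∈ T then -1 else 1, fun a => (ite_eq_or_eq _ _ _).symm, ?_⟩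
  rw [hsum]
  omega

end Sign

/-- `f` is a signed dominating function of `G`: a function with values in `{-1, 1}`, encoded as
integers, whose sum over every closed neighbourhood is positive. -/
structure IsSignedDominating_s10 {V : Type*} [Fintype V] (G : SimpleGraph V) (f : V → ℤ) : Prop where
  sign : ∀ v, f v = 1 ∨ f v = -1
  one_le_sum : ∀ v, 1 ≤ f v + ∑ u ∈ G.neighborFinset v, f u

theorem IsSignedDominating_s10.signedDomNum_eq_sum {V : Type*} [Fintype V] {G : SimpleGraph V}
    {f : V → ℤ} (hf : IsSignedDominating_s10 G f)
    (hmin : ∀ g, IsSignedDominating_s10 G g → ∑ v, f v ≤ ∑ v, g v) :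
    signedDomNum G = ∑ v, f v := by
  refine IsLeast.csInf_eq ⟨⟨f, hf.sign, hf.one_le_sum, rfl⟩, ?_⟩
  rintro _ ⟨g, hsign, hone, rfl⟩
  exact hmin g ⟨hsign, hone⟩

section CompleteMultipartite

open SimpleGraph
open scoped Finset

variable {ι : Type*} [Fintype ι] {V : ι → Type*} [∀ i, Fintype (V i)]

theorem sum_neighborFinset_completeMultipartiteGraph {M : Type*} [AddCommGroup M]
    (f : (Σ i, V i) → M) (v : Σ i, V i) [Fintype ((completeMultipartiteGraph V).neighborSet v)] :
    ∑ u ∈ (completeMultipartiteGraph V).neighborFinset v, f u = ∑ u, f u - ∑ a, f ⟨v.1, a⟩ := by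
  have hnbr : (completeMultipartiteGraph V).neighborFinset v
      = Finset.univ.filter fun u => ¬ u.1 = v.1 := by
    ext u
    simp [eq_comm]
  have hpart : ∑ u with u.1 = v.1, f u = ∑ a, f ⟨v.1, a⟩ := by
    rw [Finset.sum_filter, Fintype.sum_sigma, Fintype.sum_eq_single v.1]
    · simp
    · intro i hi
      simp [hi]
  rw [hnbr, ← hpart, eq_sub_iff_add_eq', Finset.sum_filter_add_sum_filter_not]

theorem isSignedDominating_completeMultipartiteGraph_iff {f : (Σ i, V i) → ℤ} :
    IsSignedDominating_s10 (completeMultipartiteGraph V) f ↔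
      (∀ v, f v = 1 ∨ f v = -1) ∧ ∀ v, ∑ a, f ⟨v.1, a⟩ < f v + ∑ u, f u := by
  refine ⟨fun h => ⟨h.sign, fun v => ?_⟩, fun h => ⟨h.1, fun v => ?_⟩⟩
  · have hv := h.one_le_sum v
    rw [sum_neighborFinset_completeMultipartiteGraph] at hv
    omega
  · have hv := h.2 v
    rw [sum_neighborFinset_completeMultipartiteGraph]
    omega

theorem IsSignedDominating_s10.sum_pos_of_completeMultipartiteGraph [Nonempty (Σ i, V i)]
    {f : (Σ i, V i) → ℤ} (hf : IsSignedDominating_s10 (completeMultipartiteGraph V) f) :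
    0 < ∑ v, f v := by
  obtain ⟨hsign, hdom⟩ := isSignedDominating_completeMultipartiteGraph_iff.1 hf
  by_contra! hW
  have hpart (i : ι) : ∑ a, f ⟨i, a⟩ ≤ 0 := by
    rcases isEmpty_or_nonempty (V i) with _ | ⟨⟨a⟩⟩
    · simp
    · have hia : ∑ b, f ⟨i, b⟩ < f ⟨i, a⟩ + ∑ u, f u := hdom ⟨i, a⟩
      rcases hsign ⟨i, a⟩ with h | h <;> omega
  obtain ⟨v, hv⟩ := exists_eq_neg_one_of_sum_nonpos hsign hW
  have hlt : ∑ u, f u < ∑ u, f u :=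
    calc ∑ u, f u = ∑ i, ∑ a, f ⟨i, a⟩ := Fintype.sum_sigma _
      _ = ∑ a, f ⟨v.1, a⟩ + ∑ i ∈ Finset.univ.erase v.1, ∑ a, f ⟨i, a⟩ :=
        (Finset.add_sum_erase _ _ (Finset.mem_univ _)).symm
      _ ≤ ∑ a, f ⟨v.1, a⟩ := add_le_of_nonpos_right (Finset.sum_nonpos fun i _ => hpart i)
      _ < f v + ∑ u, f u := hdom v
      _ < ∑ u, f u := by omega
  exact hlt.false

theorem even_card_sigma_iff :
    Even (Fintype.card (Σ i, V i)) ↔ Even #{i | Odd (Fintype.card (V i))} := by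
  rw [Fintype.card_sigma, Finset.even_sum_iff_even_card_odd]

theorem IsSignedDominating_s10.two_le_sum_of_completeMultipartiteGraph [Nonempty (Σ i, V i)]
    {f : (Σ i, V i) → ℤ} (hf : IsSignedDominating_s10 (completeMultipartiteGraph V) f)
    (heven : Even #{i | Odd (Fintype.card (V i))}) : 2 ≤ ∑ v, f v := by
  have hpos := hf.sum_pos_of_completeMultipartiteGraph
  obtain ⟨m, hm⟩ := (even_sum_iff_even_card_of_sign hf.sign).2 (even_card_sigma_iff.2 heven)
  omega

theorem exists_isSignedDominating_completeMultipartiteGraph (S : Finset ι)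
    (hS : ∀ i ∈ S, Fintype.card (V i) = 1 ∨ Fintype.card (V i) = 2)
    (hcard : #{i | Odd (Fintype.card (V i))} + 2 ≤ 2 * #S) :
    ∃ f, IsSignedDominating_s10 (completeMultipartiteGraph V) f ∧
      ∑ v, f v = 2 * #S - #{i | Odd (Fintype.card (V i))} := by
  choose g hg_sign hg_sum using fun i => exists_sign_sum_eq_neg_card_mod_two (V i)
  let f : (Σ i, V i) → ℤ := fun v => if v.1 ∈ S then 1 else g v.1 v.2
  have hpart_mem {i : ι} (hi : i ∈ S) : ∑ a, f ⟨i, a⟩ = Fintype.card (V i) := by simp [f, hi]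
  have hpart_notMem {i : ι} (hi : i ∉ S) : ∑ a, f ⟨i, a⟩ = -((Fintype.card (V i) : ℤ) % 2) := by
    simp [f, hi, hg_sum]
  have hpart (i : ι) : ∑ a, f ⟨i, a⟩
      = 2 * (if i ∈ S then 1 else 0) - if Odd (Fintype.card (V i)) then 1 else 0 := by
    by_cases hi : i ∈ S
    · rw [hpart_mem hi]
      rcases hS i hi with h | h <;> simp [hi, h, show ¬ Odd 2 by decide]
    · rw [hpart_notMem hi]
      split_ifs with hodd <;> grind
  have hsum : ∑ v, f v = 2 * #S - #{i | Odd (Fintype.card (V i))} := by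
    simp [Fintype.sum_sigma, hpart, Finset.sum_sub_distrib, mul_comm]
  refine ⟨f, isSignedDominating_completeMultipartiteGraph_iff.2 ⟨fun v => ?_, fun v => ?_⟩, hsum⟩
  · by_cases hv : v.1 ∈ S <;> simp [f, hv, hg_sign]
  · by_cases hv : v.1 ∈ S
    · have hfv : f v = 1 := by simp [f, hv]
      rw [hpart_mem hv]
      have hsize := hS v.1 hv
      omega
    · have hfv : f v = 1 ∨ f v = -1 := by simp [f, hv, hg_sign]
      rw [hpart_notMem hv]
      omega

variable (V) in
theorem signedDomNum_eq_two_general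
    (heven : Even #{i | Odd (Fintype.card (V i))})
    (hsmall : #{i | Odd (Fintype.card (V i))} + 2 ≤
      2 * (#{i | Fintype.card (V i) = 1} + #{i | Fintype.card (V i) = 2})) :
    signedDomNum (completeMultipartiteGraph V) = 2 := by
  have ⟨r, hr⟩ := heven
  have hcard : r + 1 ≤ #{i | Fintype.card (V i) = 1 ∨ Fintype.card (V i) = 2} := by
    rw [Finset.filter_or, Finset.card_union_of_disjoint (Finset.disjoint_filter.2 (by omega))]
    omega
  obtain ⟨S, hS_sub, hS_card⟩ := Finset.exists_subset_card_eq hcard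
  have hS : ∀ i ∈ S, Fintype.card (V i) = 1 ∨ Fintype.card (V i) = 2 :=
    fun i hi => (Finset.mem_filter.1 (hS_sub hi)).2
  obtain ⟨f, hf, hf_sum⟩ := exists_isSignedDominating_completeMultipartiteGraph S hS (by omega)
  have hf_two : ∑ v, f v = 2 := by omega
  have : Nonempty (Σ i, V i) :=
    (Finset.nonempty_of_sum_ne_zero (hf_two.trans_ne two_ne_zero)).to_type
  rw [← hf_two]
  exact hf.signedDomNum_eq_sum fun g hg =>
    hf_two.trans_le (hg.two_le_sum_of_completeMultipartiteGraph heven)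

end CompleteMultipartite

theorem signedDomNum_eq_two
    (k : ℕ) (hk : 2 ≤ k) (n : Fin k → ℕ) (hn : ∀ i, 0 < n i)
    (t : ℕ) (ht : t = (Finset.univ.filter fun i => Odd (n i)).card)
    (hteven : Even t)
    (hI : t + 2 ≤ 2 * ((Finset.univ.filter fun i => n i = 1).card
      + (Finset.univ.filter fun i => n i = 2).card)) :
    signedDomNum (SimpleGraph.completeMultipartiteGraph fun i : Fin k => Fin (n i)) = 2 := by
  subst ht
  exact signedDomNum_eq_two_general (fun i => Fin (n i)) (by simpa using hteven) (by simpa using hI)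
end
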